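/- For every element U of the Clifford+T group and all indices i, j ∈ {1,…,8}, the entry tr(Qᵢ U Qⱼ U†) of the adjoint representation Û is a real number lying in the subring ℤ[1/2,1/α] of ℝ generated by 1/2, α, and α⁻¹, where α = sin(2π/9). -/

import Mathlib

open Matrix Complex

noncomputable section

/-- ω = exp(2πi/3), a primitive third root of unity. -/
def ω : ℂ := exp (2 * Real.pi * I / 3)

/-- ζ = exp(2πi/9), a primitive ninth root of unity. -/
def ζ : ℂ := exp (2 * Real.pi * I / 9)

/-- The qutrit Pauli X matrix. -/
def Xmat : Matrix (Fin 3) (Fin 3) ℂ := !![0,0,1; 1,0,0; 0,1,0]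

/-- The qutrit Pauli Z matrix. -/
def Zmat : Matrix (Fin 3) (Fin 3) ℂ := !![1,0,0; 0,ω,0; 0,0,ω^2]

/-- The qutrit Hadamard matrix H = (1/(i√3))·[[1,1,1],[1,ω,ω²],[1,ω²,ω]]. -/
def Hmat : Matrix (Fin 3) (Fin 3) ℂ :=
  (I * (Real.sqrt 3 : ℂ))⁻¹ • !![1,1,1; 1,ω,ω^2; 1,ω^2,ω]

/-- The qutrit phase matrix S = ζ⁸·diag(1,1,ω). -/
def Smat : Matrix (Fin 3) (Fin 3) ℂ := ζ^8 • !![1,0,0; 0,1,0; 0,0,ω]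

/-- The qutrit T matrix T = diag(1,ζ,ζ⁸). -/
def Tmat : Matrix (Fin 3) (Fin 3) ℂ := !![1,0,0; 0,ζ,0; 0,0,ζ^8]

lemma omega_ne_zero : ω ≠ 0 := Complex.exp_ne_zero _
lemma zeta_ne_zero : ζ ≠ 0 := Complex.exp_ne_zero _

lemma omega_im_pos : 0 < ω.im := by
  have h : ω = Complex.exp ((2 * Real.pi / 3 : ℝ) * I) := by
    rw [ω]; push_cast; ring_nf
  rw [h, Complex.exp_ofReal_mul_I_im]
  apply Real.sin_pos_of_pos_of_lt_pi
  · positivity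
  · nlinarith [Real.pi_pos]

lemma omega_ne_one : ω ≠ 1 := by
  intro h
  have := omega_im_pos
  rw [h] at this
  simp at this

lemma omega_cube : ω ^ 3 = 1 := by
  rw [ω, ← Complex.exp_nat_mul]
  rw [show (3:ℕ) * (2 * Real.pi * I / 3) = 2 * Real.pi * I by push_cast; ring]
  exact Complex.exp_two_pi_mul_I

lemma detX : Xmat.det ≠ 0 := by
  simp [Xmat, Matrix.det_fin_three]

lemma detZ : Zmat.det ≠ 0 := by
  simp [Zmat, Matrix.det_fin_three, omega_ne_zero]

lemma detS : Smat.det ≠ 0 := by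
  simp [Smat, Matrix.det_fin_three, omega_ne_zero, zeta_ne_zero]

lemma detT : Tmat.det ≠ 0 := by
  simp [Tmat, Matrix.det_fin_three, zeta_ne_zero]

lemma detH : Hmat.det ≠ 0 := by
  rw [Hmat, Matrix.det_smul]
  apply mul_ne_zero
  · apply pow_ne_zero
    apply inv_ne_zero
    apply mul_ne_zero Complex.I_ne_zero
    simp [Complex.ofReal_ne_zero]
  · rw [Matrix.det_fin_three]
    simp [Matrix.vecHead, Matrix.vecTail]
    intro h
    have h3 : ω ^ 3 = 1 := omega_cube
    have key : 3 * ω * (ω - 1) = 0 := by linear_combination h + ω * h3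
    rcases mul_eq_zero.mp key with h' | h'
    · rcases mul_eq_zero.mp h' with h'' | h''
      · norm_num at h''
      · exact omega_ne_zero h''
    · exact omega_ne_one (by linear_combination h')

/-- X as an element of GL(3, ℂ). -/
def Xg : GL (Fin 3) ℂ := Matrix.GeneralLinearGroup.mkOfDetNeZero Xmat detX

/-- Z as an element of GL(3, ℂ). -/
def Zg : GL (Fin 3) ℂ := Matrix.GeneralLinearGroup.mkOfDetNeZero Zmat detZ

/-- H as an element of GL(3, ℂ). -/
def Hg : GL (Fin 3) ℂ := Matrix.GeneralLinearGroup.mkOfDetNeZero Hmat detH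

/-- S as an element of GL(3, ℂ). -/
def Sg : GL (Fin 3) ℂ := Matrix.GeneralLinearGroup.mkOfDetNeZero Smat detS

/-- T as an element of GL(3, ℂ). -/
def Tg : GL (Fin 3) ℂ := Matrix.GeneralLinearGroup.mkOfDetNeZero Tmat detT

/-- The Clifford group 𝒞: the subgroup of GL(3,ℂ) generated by H and S. -/
def Cliff : Subgroup (GL (Fin 3) ℂ) := Subgroup.closure {Hg, Sg}

/-- The Clifford+T group: the subgroup of GL(3,ℂ) generated by H, S and T. -/
def CliffT : Subgroup (GL (Fin 3) ℂ) := Subgroup.closure {Hg, Sg, Tg}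

/-- The subgroup 𝒮 of GL(3,ℂ) generated by S and X. -/
def Sgrp : Subgroup (GL (Fin 3) ℂ) := Subgroup.closure {Sg, Xg}

/-- Letters of words over the alphabet {H, S, T}. -/
inductive Letter : Type
  | H : Letter
  | S : Letter
  | T : Letter
  deriving DecidableEq

/-- The gate associated to a letter. -/
def Letter.g : Letter → GL (Fin 3) ℂ
  | .H => Hg
  | .S => Sg
  | .T => Tg

/-- The product of the letters of a word. -/
def wordProd (w : List Letter) : GL (Fin 3) ℂ := (w.map Letter.g).prod

/-- The allowed prefixes of a canonical form: ε, T, H²T. -/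
def Prefixes : Set (List Letter) := {[], [.T], [.H, .H, .T]}

/-- The allowed syllables of a canonical form: HT, H³T, SHT, SH³T, S²HT, S²H³T. -/
def Syllables : Set (List Letter) :=
  {[.H, .T], [.H, .H, .H, .T], [.S, .H, .T],
   [.S, .H, .H, .H, .T], [.S, .S, .H, .T], [.S, .S, .H, .H, .H, .T]}

/-- The T-count of a canonical form with prefix `p` and syllable list `ss`:
`k` if the prefix is empty and `k+1` otherwise, where `k` is the number of syllables. -/
def TCount (p : List Letter) (ss : List (List Letter)) : ℕ :=
  ss.length + (if p = [] then 0 else 1)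

/-- P₊ = (P + P²)/√6. -/
def Pplus (P : Matrix (Fin 3) (Fin 3) ℂ) : Matrix (Fin 3) (Fin 3) ℂ :=
  ((Real.sqrt 6 : ℂ))⁻¹ • (P + P ^ 2)

/-- P₋ = i(P − P²)/√6. -/
def Pminus (P : Matrix (Fin 3) (Fin 3) ℂ) : Matrix (Fin 3) (Fin 3) ℂ :=
  (I * ((Real.sqrt 6 : ℂ))⁻¹) • (P - P ^ 2)

/-- The ordered tuple (Q₁, …, Q₈) = (Z₊, X₊, (XZ)₊, (XZ²)₊, Z₋, X₋, (XZ)₋, (XZ²)₋). -/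
def Q : Fin 8 → Matrix (Fin 3) (Fin 3) ℂ :=
  ![Pplus Zmat, Pplus Xmat, Pplus (Xmat * Zmat), Pplus (Xmat * Zmat ^ 2),
    Pminus Zmat, Pminus Xmat, Pminus (Xmat * Zmat), Pminus (Xmat * Zmat ^ 2)]

/-- The adjoint representation Û of U, the 8×8 real matrix with
entries Û_{ij} = tr(Qᵢ U Qⱼ U†). -/
def adj (U : Matrix (Fin 3) (Fin 3) ℂ) : Matrix (Fin 8) (Fin 8) ℝ :=
  Matrix.of fun i j => (Matrix.trace (Q i * U * Q j * Uᴴ)).re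

/-- The top-left 4×4 quadrant Û₊₊. -/
def blockPP (A : Matrix (Fin 8) (Fin 8) ℝ) : Matrix (Fin 4) (Fin 4) ℝ :=
  Matrix.of fun i j => A ⟨i.val, by omega⟩ ⟨j.val, by omega⟩

/-- The top-right 4×4 quadrant Û₊₋. -/
def blockPM (A : Matrix (Fin 8) (Fin 8) ℝ) : Matrix (Fin 4) (Fin 4) ℝ :=
  Matrix.of fun i j => A ⟨i.val, by omega⟩ ⟨j.val + 4, by omega⟩

/-- The bottom-left 4×4 quadrant Û₋₊. -/
def blockMP (A : Matrix (Fin 8) (Fin 8) ℝ) : Matrix (Fin 4) (Fin 4) ℝ :=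
  Matrix.of fun i j => A ⟨i.val + 4, by omega⟩ ⟨j.val, by omega⟩

/-- The bottom-right 4×4 quadrant Û₋₋. -/
def blockMM (A : Matrix (Fin 8) (Fin 8) ℝ) : Matrix (Fin 4) (Fin 4) ℝ :=
  Matrix.of fun i j => A ⟨i.val + 4, by omega⟩ ⟨j.val + 4, by omega⟩

/-- α = sin(2π/9). -/
def αR : ℝ := Real.sin (2 * Real.pi / 9)

/-- The ring ℤ[α]: the subring of ℝ generated by 1/2 and α. -/
def Zα : Subring ℝ := Subring.closure {1/2, αR}

/-- The ring ℤ[1/2, 1/α]: the subring of ℝ generated by 1/2, α and α⁻¹. -/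
def Zhα : Subring ℝ := Subring.closure {1/2, αR, αR⁻¹}

lemma alpha_mem_Zα : αR ∈ Zα := Subring.subset_closure (by simp)

/-! ### Auxiliary lemmas -/

lemma aux_half : (1/2 : ℝ) ∈ Zhα := Subring.subset_closure (by simp)
lemma aux_alpha : αR ∈ Zhα := Subring.subset_closure (by simp)
lemma aux_alpha_inv : αR⁻¹ ∈ Zhα := Subring.subset_closure (by simp)

lemma aux_alpha_pos : 0 < αR := by
  apply Real.sin_pos_of_pos_of_lt_pi
  · positivity
  · linarith [Real.pi_pos]

lemma aux_sqrt3_eq : Real.sqrt 3 = 2 * (3 * αR - 4 * αR ^ 3) := by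
  have h := Real.sin_three_mul (2 * Real.pi / 9)
  have h2 : Real.sin (3 * (2 * Real.pi / 9)) = Real.sqrt 3 / 2 := by
    rw [← Real.sin_pi_div_three, ← Real.sin_pi_sub]
    congr 1
    ring
  rw [h2] at h
  unfold αR
  linarith

lemma aux_sqrt3 : Real.sqrt 3 ∈ Zhα := by
  rw [aux_sqrt3_eq]
  have h := aux_alpha
  exact Zhα.mul_mem (by exact_mod_cast natCast_mem Zhα 2)
    (Zhα.sub_mem (Zhα.mul_mem (by exact_mod_cast natCast_mem Zhα 3) h)
      (Zhα.mul_mem (by exact_mod_cast natCast_mem Zhα 4) (Zhα.pow_mem h 3)))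

/-- `1/3` lies in the ring: with `t = 4α²` one has `t³ = 3(1-t)(1-2t)`. -/
lemma aux_third : (1/3 : ℝ) ∈ Zhα := by
  have hs : Real.sqrt 3 ^ 2 = 3 := Real.sq_sqrt (by norm_num)
  rw [aux_sqrt3_eq] at hs
  have hp := aux_alpha_pos.ne'
  have key : (1/3 : ℝ) = (1 - 4 * αR ^ 2) * (1 - 8 * αR ^ 2) * ((1/2) ^ 6 * αR⁻¹ ^ 6) := by
    field_simp
    linear_combination hs
  rw [key]
  have h := aux_alpha
  have h4 : (4 : ℝ) ∈ Zhα := by exact_mod_cast natCast_mem Zhα 4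
  have h8 : (8 : ℝ) ∈ Zhα := by exact_mod_cast natCast_mem Zhα 8
  exact Zhα.mul_mem (Zhα.mul_mem
    (Zhα.sub_mem Zhα.one_mem (Zhα.mul_mem h4 (Zhα.pow_mem h 2)))
    (Zhα.sub_mem Zhα.one_mem (Zhα.mul_mem h8 (Zhα.pow_mem h 2))))
    (Zhα.mul_mem (Zhα.pow_mem aux_half 6) (Zhα.pow_mem aux_alpha_inv 6))

lemma aux_cos : Real.cos (2 * Real.pi / 9) ∈ Zhα := by
  have e1 : Real.cos (4 * Real.pi / 9) = 1 - 2 * αR ^ 2 := by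
    have := Real.cos_two_mul (2 * Real.pi / 9)
    rw [show 4 * Real.pi / 9 = 2 * (2 * Real.pi / 9) by ring, this, Real.cos_sq', αR]
    ring
  have e2 : Real.cos (8 * Real.pi / 9) = 2 * (1 - 2 * αR ^ 2) ^ 2 - 1 := by
    rw [← e1, ← Real.cos_two_mul]
    congr 1
    ring
  have e3 : Real.cos (2 * Real.pi / 9) = 2 * (2 * (1 - 2 * αR ^ 2) ^ 2 - 1) ^ 2 - 1 := by
    rw [← e2, ← Real.cos_two_mul, ← Real.cos_two_pi_sub]
    congr 1
    ring
  rw [e3]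
  have h2 : (2 : ℝ) ∈ Zhα := by exact_mod_cast natCast_mem Zhα 2
  have a1 := Zhα.sub_mem Zhα.one_mem (Zhα.mul_mem h2 (Zhα.pow_mem aux_alpha 2))
  have a2 := Zhα.sub_mem (Zhα.mul_mem h2 (Zhα.pow_mem a1 2)) Zhα.one_mem
  exact Zhα.sub_mem (Zhα.mul_mem h2 (Zhα.pow_mem a2 2)) Zhα.one_mem

/-- The ring `R[i]` inside `ℂ`, where `R = ℤ[1/2,1/α]`. -/
def auxK : Subring ℂ where
  carrier := {z | z.re ∈ Zhα ∧ z.im ∈ Zhα}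
  mul_mem' := by
    rintro a b ⟨ha, ha'⟩ ⟨hb, hb'⟩
    simp only [Set.mem_ofPred_eq, Complex.mul_re, Complex.mul_im]
    exact ⟨Zhα.sub_mem (Zhα.mul_mem ha hb) (Zhα.mul_mem ha' hb'),
      Zhα.add_mem (Zhα.mul_mem ha hb') (Zhα.mul_mem ha' hb)⟩
  one_mem' := by simp [Zhα.one_mem, Zhα.zero_mem]
  add_mem' := by
    rintro a b ⟨ha, ha'⟩ ⟨hb, hb'⟩
    exact ⟨Zhα.add_mem ha hb, Zhα.add_mem ha' hb'⟩
  zero_mem' := by simp [Zhα.zero_mem]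
  neg_mem' := by
    rintro a ⟨ha, ha'⟩
    exact ⟨Zhα.neg_mem ha, Zhα.neg_mem ha'⟩

lemma auxK_ofReal {r : ℝ} (h : r ∈ Zhα) : (r : ℂ) ∈ auxK :=
  ⟨by simpa using h, by simp [Zhα.zero_mem]⟩

lemma auxK_I : I ∈ auxK := ⟨by simp [Zhα.zero_mem], by simp [Zhα.one_mem]⟩

lemma auxK_star {z : ℂ} (h : z ∈ auxK) : star z ∈ auxK :=
  ⟨by simpa using h.1, by simpa using Zhα.neg_mem h.2⟩

lemma aux_zeta_eq : ζ = exp ((2 * Real.pi / 9 : ℝ) * I) := by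
  rw [ζ]; push_cast; ring_nf

lemma aux_omega_eq : ω = exp ((2 * Real.pi / 3 : ℝ) * I) := by
  rw [ω]; push_cast; ring_nf

lemma auxK_zeta : ζ ∈ auxK := by
  rw [aux_zeta_eq]
  refine ⟨?_, ?_⟩
  · rw [Complex.exp_ofReal_mul_I_re]; exact aux_cos
  · rw [Complex.exp_ofReal_mul_I_im]; exact aux_alpha

lemma aux_zeta_cube : ζ ^ 3 = ω := by
  rw [ζ, ω, ← Complex.exp_nat_mul]
  congr 1
  push_cast
  ring

lemma auxK_omega : ω ∈ auxK := by
  rw [← aux_zeta_cube]; exact auxK.pow_mem auxK_zeta 3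

lemma aux_zeta_star : star ζ = ζ ^ 8 := by
  have h9 : ζ ^ 9 = 1 := by
    rw [show ζ ^ 9 = (ζ ^ 3) ^ 3 by ring, aux_zeta_cube, omega_cube]
  have h1 : star ζ * ζ = 1 := by
    rw [aux_zeta_eq]
    change (starRingEnd ℂ) _ * _ = 1
    rw [← Complex.exp_conj, ← Complex.exp_add, map_mul, Complex.conj_ofReal, Complex.conj_I,
      mul_neg, neg_add_cancel, Complex.exp_zero]
  have : star ζ * ζ * ζ ^ 8 = ζ ^ 8 := by rw [h1, one_mul]
  rw [← this, mul_assoc, show ζ * ζ ^ 8 = ζ ^ 9 by ring, h9, mul_one]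

lemma aux_zeta9 : ζ ^ 9 = 1 := by
  rw [show ζ ^ 9 = (ζ ^ 3) ^ 3 by ring, aux_zeta_cube, omega_cube]

lemma aux_omega_star : star ω = ω ^ 2 := by
  rw [← aux_zeta_cube, star_pow, aux_zeta_star]
  linear_combination (ζ ^ 6 * (ζ ^ 9 + 1)) * aux_zeta9

lemma aux_omega_sum : 1 + ω + ω ^ 2 = 0 := by
  have h : (ω - 1) * (1 + ω + ω ^ 2) = 0 := by linear_combination omega_cube
  exact (mul_eq_zero.mp h).resolve_left (sub_ne_zero.mpr omega_ne_one)

/-- Matrices with entries in `R[i]`. -/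
def auxM (A : Matrix (Fin 3) (Fin 3) ℂ) : Prop := ∀ i j, A i j ∈ auxK

lemma auxM_mul {A B : Matrix (Fin 3) (Fin 3) ℂ} (hA : auxM A) (hB : auxM B) : auxM (A * B) := by
  intro i j
  rw [Matrix.mul_apply]
  exact auxK.sum_mem fun k _ => auxK.mul_mem (hA i k) (hB k j)

lemma auxM_add {A B : Matrix (Fin 3) (Fin 3) ℂ} (hA : auxM A) (hB : auxM B) : auxM (A + B) :=
  fun i j => auxK.add_mem (hA i j) (hB i j)

lemma auxM_sub {A B : Matrix (Fin 3) (Fin 3) ℂ} (hA : auxM A) (hB : auxM B) : auxM (A - B) :=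
  fun i j => auxK.sub_mem (hA i j) (hB i j)

lemma auxM_smul {c : ℂ} {A : Matrix (Fin 3) (Fin 3) ℂ} (hc : c ∈ auxK) (hA : auxM A) :
    auxM (c • A) := fun i j => auxK.mul_mem hc (hA i j)

lemma auxM_star {A : Matrix (Fin 3) (Fin 3) ℂ} (hA : auxM A) : auxM Aᴴ :=
  fun i j => auxK_star (hA j i)

lemma auxM_one : auxM 1 := by
  intro i j
  rw [Matrix.one_apply]
  split_ifs
  · exact auxK.one_mem
  · exact auxK.zero_mem

lemma auxM_X : auxM Xmat := by
  intro i j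
  fin_cases i <;> fin_cases j <;> simp [Xmat, auxK.one_mem, auxK.zero_mem]

lemma auxM_Z : auxM Zmat := by
  intro i j
  fin_cases i <;> fin_cases j <;>
    simp [Zmat, auxK.one_mem, auxK.zero_mem, auxK_omega, auxK.pow_mem auxK_omega 2]

lemma auxM_T : auxM Tmat := by
  intro i j
  fin_cases i <;> fin_cases j <;>
    simp [Tmat, auxK.one_mem, auxK.zero_mem, auxK_zeta, auxK.pow_mem auxK_zeta 8]

lemma auxM_S : auxM Smat := by
  refine auxM_smul (auxK.pow_mem auxK_zeta 8) ?_
  intro i j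
  fin_cases i <;> fin_cases j <;>
    simp [auxK.one_mem, auxK.zero_mem, auxK_omega]

lemma aux_sqrt3_sq : (Real.sqrt 3 : ℂ) ^ 2 = 3 := by
  rw [← Complex.ofReal_pow, Real.sq_sqrt (by norm_num)]; norm_num

lemma aux_hcoef : (I * (Real.sqrt 3 : ℂ))⁻¹ = -I * (Real.sqrt 3 : ℂ) * ((1/3 : ℝ) : ℂ) := by
  apply inv_eq_of_mul_eq_one_right
  push_cast
  linear_combination (-I ^ 2 / 3) * aux_sqrt3_sq - Complex.I_sq

lemma auxM_H : auxM Hmat := by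
  refine auxM_smul ?_ ?_
  · rw [aux_hcoef]
    exact auxK.mul_mem (auxK.mul_mem (auxK.neg_mem auxK_I) (auxK_ofReal aux_sqrt3))
      (auxK_ofReal aux_third)
  intro i j
  fin_cases i <;> fin_cases j <;>
    simp [auxK.one_mem, auxK_omega, auxK.pow_mem auxK_omega 2]

lemma aux_unit_T : Tmat * Tmatᴴ = 1 := by
  have h := aux_zeta_star
  have h9 := aux_zeta9
  simp only [← starRingEnd_apply] at h
  ext i j
  fin_cases i <;> fin_cases j <;>
    simp [Tmat, Matrix.mul_apply, Fin.sum_univ_three, h]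
  · linear_combination h9
  · linear_combination (ζ ^ 63 + ζ ^ 54 + ζ ^ 45 + ζ ^ 36 + ζ ^ 27 + ζ ^ 18 + ζ ^ 9 + 1) * h9

lemma aux_unit_S : Smat * Smatᴴ = 1 := by
  have h := aux_zeta_star
  have h' := aux_omega_star
  have h9 := aux_zeta9
  have h3 := omega_cube
  simp only [← starRingEnd_apply] at h h'
  have h72 : ζ ^ 8 * (ζ ^ 8) ^ 8 = 1 := by
    rw [show ζ ^ 8 * (ζ ^ 8) ^ 8 = (ζ ^ 9) ^ 8 by ring, h9, one_pow]
  ext i j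
  fin_cases i <;> fin_cases j <;>
    simp [Smat, Matrix.mul_apply, Fin.sum_univ_three, h, h', h72]
  linear_combination h72 + ζ ^ 8 * (ζ ^ 8) ^ 8 * h3

lemma aux_unit_H : Hmat * Hmatᴴ = 1 := by
  have h' := aux_omega_star
  have h3 := omega_cube
  have hs := aux_omega_sum
  have hq := aux_sqrt3_sq
  have hI := Complex.I_sq
  simp only [← starRingEnd_apply] at h'
  have hc : (-I * (Real.sqrt 3 : ℂ) * ((1/3 : ℝ) : ℂ)) *
      star (-I * (Real.sqrt 3 : ℂ) * ((1/3 : ℝ) : ℂ)) = 1 / 3 := by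
    simp only [← starRingEnd_apply, map_mul, map_neg, Complex.conj_I, Complex.conj_ofReal]
    push_cast
    linear_combination (-(Real.sqrt 3 : ℂ) ^ 2 / 9) * hI + hq / 9
  rw [Hmat, aux_hcoef, Matrix.conjTranspose_smul, Matrix.smul_mul, Matrix.mul_smul, smul_smul, hc]
  ext i j
  rw [Matrix.smul_apply, Matrix.mul_apply, Fin.sum_univ_three]
  fin_cases i <;> fin_cases j <;>
    simp [h']
  all_goals grind

/-- Invariant of the Clifford+T group. -/
lemma aux_inv (U : GL (Fin 3) ℂ) (hU : U ∈ CliffT) :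
    auxM (U : Matrix (Fin 3) (Fin 3) ℂ) ∧
      (U : Matrix (Fin 3) (Fin 3) ℂ) * (U : Matrix (Fin 3) (Fin 3) ℂ)ᴴ = 1 := by
  unfold CliffT at hU
  induction hU using Subgroup.closure_induction with
  | mem x hx =>
    rcases hx with rfl | rfl | rfl
    · exact ⟨auxM_H, aux_unit_H⟩
    · exact ⟨auxM_S, aux_unit_S⟩
    · exact ⟨auxM_T, aux_unit_T⟩
  | one => exact ⟨by simpa using auxM_one, by simp⟩
  | mul x y _ _ hx hy =>
    refine ⟨by simpa using auxM_mul hx.1 hy.1, ?_⟩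
    rw [Units.val_mul, Matrix.conjTranspose_mul, Matrix.mul_assoc, ← Matrix.mul_assoc _ _ (x.val)ᴴ,
      hy.2, Matrix.one_mul, hx.2]
  | inv x _ hx =>
    have e : ((x⁻¹ : GL (Fin 3) ℂ) : Matrix (Fin 3) (Fin 3) ℂ)
        = (x : Matrix (Fin 3) (Fin 3) ℂ)ᴴ := Units.inv_eq_of_mul_eq_one_right hx.2
    rw [e, Matrix.conjTranspose_conjTranspose]
    exact ⟨auxM_star hx.1, mul_eq_one_comm.mp hx.2⟩

lemma aux_sqrt6_star : star ((Real.sqrt 6 : ℂ))⁻¹ = ((Real.sqrt 6 : ℂ))⁻¹ := by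
  simp only [← starRingEnd_apply, map_inv₀, Complex.conj_ofReal]

lemma auxX : Xmatᴴ = Xmat ^ 2 := by
  ext i j
  fin_cases i <;> fin_cases j <;>
    simp [Xmat, pow_two, Matrix.mul_apply, Fin.sum_univ_three]

lemma auxZ : Zmatᴴ = Zmat ^ 2 := by
  have h' := aux_omega_star
  simp only [← starRingEnd_apply] at h'
  ext i j
  fin_cases i <;> fin_cases j <;>
    simp [Zmat, pow_two, Matrix.mul_apply, Fin.sum_univ_three, h'] <;> ring

lemma auxXZ : (Xmat * Zmat)ᴴ = (Xmat * Zmat) ^ 2 := by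
  have h' := aux_omega_star
  have h3 := omega_cube
  simp only [← starRingEnd_apply] at h'
  ext i j
  fin_cases i <;> fin_cases j <;>
    simp [Xmat, Zmat, pow_two, Matrix.mul_apply, Fin.sum_univ_three, h'] <;> grind

lemma auxXZZ : (Xmat * Zmat ^ 2)ᴴ = (Xmat * Zmat ^ 2) ^ 2 := by
  have h' := aux_omega_star
  have h3 := omega_cube
  simp only [← starRingEnd_apply] at h'
  ext i j
  fin_cases i <;> fin_cases j <;>
    simp [Xmat, Zmat, pow_two, Matrix.mul_apply, Fin.sum_univ_three, h'] <;> grind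

/-- Hermitian, with `√6` multiple over `R[i]`. -/
def auxGood (A : Matrix (Fin 3) (Fin 3) ℂ) : Prop :=
  Aᴴ = A ∧ ∃ B, auxM B ∧ A = ((Real.sqrt 6 : ℂ))⁻¹ • B

lemma auxPplus {P : Matrix (Fin 3) (Fin 3) ℂ} (h : auxM P) (hP : Pᴴ = P ^ 2) :
    auxGood (Pplus P) := by
  have hP' : (P ^ 2)ᴴ = P := by rw [← hP, Matrix.conjTranspose_conjTranspose]
  refine ⟨?_, P + P ^ 2, auxM_add h (by rw [pow_two]; exact auxM_mul h h), rfl⟩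
  rw [Pplus, Matrix.conjTranspose_smul, aux_sqrt6_star, Matrix.conjTranspose_add, hP', hP, add_comm]

lemma auxPminus {P : Matrix (Fin 3) (Fin 3) ℂ} (h : auxM P) (hP : Pᴴ = P ^ 2) :
    auxGood (Pminus P) := by
  have hP' : (P ^ 2)ᴴ = P := by rw [← hP, Matrix.conjTranspose_conjTranspose]
  refine ⟨?_, I • (P - P ^ 2),
    auxM_smul auxK_I (auxM_sub h (by rw [pow_two]; exact auxM_mul h h)), ?_⟩
  · have hI : star I = -I := Complex.conj_I
    rw [Pminus, Matrix.conjTranspose_smul, star_mul, aux_sqrt6_star, Matrix.conjTranspose_sub,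
      hP', hP, hI, ← neg_sub P, smul_neg, mul_neg, neg_smul, neg_neg, mul_comm]
  · rw [Pminus, smul_smul, mul_comm]

lemma auxQ (i : Fin 8) : auxGood (Q i) := by
  have hXZ := auxM_mul auxM_X auxM_Z
  have hXZZ : auxM (Xmat * Zmat ^ 2) :=
    auxM_mul auxM_X (by rw [pow_two]; exact auxM_mul auxM_Z auxM_Z)
  fin_cases i
  · exact auxPplus auxM_Z auxZ
  · exact auxPplus auxM_X auxX
  · exact auxPplus hXZ auxXZ
  · exact auxPplus hXZZ auxXZZ
  · exact auxPminus auxM_Z auxZ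
  · exact auxPminus auxM_X auxX
  · exact auxPminus hXZ auxXZ
  · exact auxPminus hXZZ auxXZZ

/-- For every element U of the Clifford+T group and all indices
i, j ∈ {1,…,8}, the entry tr(Qᵢ U Qⱼ U†) of the adjoint representation Û is a real
number lying in the subring ℤ[1/2,1/α] of ℝ generated by 1/2, α, and α⁻¹,
where α = sin(2π/9). -/
theorem adjoint_entries_in_ring :
    ∀ U ∈ CliffT, ∀ i j : Fin 8, ∃ r : ℝ, r ∈ Zhα ∧
      Matrix.trace (Q i * (U : Matrix (Fin 3) (Fin 3) ℂ) * Q j *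
        ((U : Matrix (Fin 3) (Fin 3) ℂ))ᴴ) = (r : ℂ) := by
  intro U hU i j
  obtain ⟨hM, -⟩ := aux_inv U hU
  obtain ⟨hi, A, hA, eA⟩ := auxQ i
  obtain ⟨hj, B, hB, eB⟩ := auxQ j
  set V := (U : Matrix (Fin 3) (Fin 3) ℂ) with hV
  have hreal : star (Matrix.trace (Q i * V * Q j * Vᴴ)) = Matrix.trace (Q i * V * Q j * Vᴴ) := by
    rw [← Matrix.trace_conjTranspose]
    simp only [Matrix.conjTranspose_mul, Matrix.conjTranspose_conjTranspose, hi, hj]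
    rw [← Matrix.mul_assoc, ← Matrix.mul_assoc, Matrix.trace_mul_comm]
    simp only [Matrix.mul_assoc]
  have hmem : Matrix.trace (Q i * V * Q j * Vᴴ) ∈ auxK := by
    have h6 : ((Real.sqrt 6 : ℂ))⁻¹ * ((Real.sqrt 6 : ℂ))⁻¹ = ((1/2 * (1/3) : ℝ) : ℂ) := by
      rw [← mul_inv, ← Complex.ofReal_mul, Real.mul_self_sqrt (by norm_num)]
      norm_num
    rw [eA, eB]
    simp only [Matrix.smul_mul, Matrix.mul_smul, smul_smul, h6]
    rw [Matrix.trace]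
    exact auxK.sum_mem fun k _ => auxM_smul (auxK_ofReal (Zhα.mul_mem aux_half aux_third))
      (auxM_mul (auxM_mul (auxM_mul hA hM) hB) (auxM_star hM)) k k
  exact ⟨_, hmem.1, (Complex.conj_eq_iff_re.mp hreal).symm⟩

end
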